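/- Let R ∈ ℝ and 𝔎, 𝔟, 𝔠 ∈ ℂ with 𝔠 ≠ 0 and 𝔟 + 𝔠·ψ ≠ 0 for every ψ ∈ [−1,1]. Define the complex constants C₁ = 𝔎R²/(𝔠(𝔟²−𝔠²)) + conj(𝔎)R²/(conj(𝔠)(conj(𝔟)²−conj(𝔠)²)) and C₂ = −𝔎R²𝔟/(𝔠²(𝔟²−𝔠²)) − conj(𝔎)R²·conj(𝔟)/(conj(𝔠)²(conj(𝔟)²−conj(𝔠)²)), and define F : ℝ → ℂ by F(ψ) = C₂ + C₁ψ + 𝔎R²/(𝔠²(𝔟+𝔠ψ)) + conj(𝔎)R²/(conj(𝔠)²(conj(𝔟)+conj(𝔠)ψ)). Then: (i) F is real-valued, i.e. conj(F(ψ)) = F(ψ) for all ψ ∈ [−1,1]; (ii) F(−1) = 0 and F(1) = 0; and (iii) for every ψ ∈ [−1,1], F″(ψ) = 2·(𝔎R²/(𝔟+𝔠ψ)³ + conj(𝔎)R²/(conj(𝔟)+conj(𝔠)ψ)³). -/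

import Mathlib

/-!
Each of the two conjugate halves of `F` is an affine function plus `A / (q² (p + q ψ))`, whose
second derivative is `2A / (p + q ψ)³`; the affine part is the one that cancels the values of this
term at `ψ = ±1`. Reality holds because `F` is the sum of an expression and its conjugate.
The denominators do not vanish on an open neighbourhood of each point of `[-1, 1]`, which is what
the second derivative, in particular at the endpoints, requires.
-/

open ComplexConjugate

lemma hasDerivAt_pole (A p q : ℂ) (hq : q ≠ 0) (x : ℝ) (hx : p + q * (x : ℂ) ≠ 0) :
    HasDerivAt (fun y : ℝ => A / (q ^ 2 * (p + q * (y : ℂ))))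
      (-(A / (q * (p + q * (x : ℂ)) ^ 2))) x := by
  have h1 : HasDerivAt (fun y : ℝ => p + q * (y : ℂ)) (q * 1) x :=
    ((Complex.ofRealCLM.hasDerivAt (x := x)).const_mul q).const_add p
  have h2 := (hasDerivAt_const x A).fun_div (h1.const_mul (q ^ 2))
    (mul_ne_zero (pow_ne_zero 2 hq) hx)
  refine h2.congr_deriv ?_
  field_simp
  ring

lemma hasDerivAt_double_pole (A p q : ℂ) (hq : q ≠ 0) (x : ℝ) (hx : p + q * (x : ℂ) ≠ 0) :
    HasDerivAt (fun y : ℝ => -(A / (q * (p + q * (y : ℂ)) ^ 2)))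
      (2 * (A / (p + q * (x : ℂ)) ^ 3)) x := by
  have h1 : HasDerivAt (fun y : ℝ => p + q * (y : ℂ)) (q * 1) x :=
    ((Complex.ofRealCLM.hasDerivAt (x := x)).const_mul q).const_add p
  have h2 := ((hasDerivAt_const x A).fun_div ((h1.fun_pow 2).const_mul q)
    (mul_ne_zero hq (pow_ne_zero 2 hx))).fun_neg
  refine h2.congr_deriv ?_
  field_simp
  norm_num
  ring

/-- The affine part with the chosen constants cancels the pole term at `ψ = s` when `s² = 1`. -/
lemma half_vanishes (A p q s : ℂ) (hq : q ≠ 0) (hs : s ^ 2 = 1) (h1 : p + q * s ≠ 0)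
    (h2 : p - q * s ≠ 0) :
    -(A * p / (q ^ 2 * (p ^ 2 - q ^ 2))) + A / (q * (p ^ 2 - q ^ 2)) * s
      + A / (q ^ 2 * (p + q * s)) = 0 := by
  have h3 : p ^ 2 - q ^ 2 = (p + q * s) * (p - q * s) := by linear_combination q ^ 2 * hs
  rw [h3]
  field_simp
  ring

/-- The explicit solution `F = Q²` of the curvature equation on the bifurcation sphere:
`F` is real-valued on `[-1,1]`, vanishes at `ψ = ±1`, and satisfies
`F″(ψ) = 2(𝔎R²/(𝔟+𝔠ψ)³ + conj(𝔎)R²/(conj(𝔟)+conj(𝔠)ψ)³)` on `[-1,1]`. -/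
theorem frame_coefficient_properties (R : ℝ) (𝔎 𝔟 𝔠 : ℂ) (hc : 𝔠 ≠ 0)
    (h : ∀ ψ ∈ Set.Icc (-1 : ℝ) 1, 𝔟 + 𝔠 * (ψ : ℂ) ≠ 0)
    (C₁ C₂ : ℂ)
    (hC₁ : C₁ = 𝔎 * (R : ℂ) ^ 2 / (𝔠 * (𝔟 ^ 2 - 𝔠 ^ 2)) +
      conj 𝔎 * (R : ℂ) ^ 2 / (conj 𝔠 * ((conj 𝔟) ^ 2 - (conj 𝔠) ^ 2)))
    (hC₂ : C₂ = -(𝔎 * (R : ℂ) ^ 2 * 𝔟 / (𝔠 ^ 2 * (𝔟 ^ 2 - 𝔠 ^ 2))) -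
      conj 𝔎 * (R : ℂ) ^ 2 * conj 𝔟 / ((conj 𝔠) ^ 2 * ((conj 𝔟) ^ 2 - (conj 𝔠) ^ 2)))
    (F : ℝ → ℂ)
    (hF : ∀ ψ : ℝ, F ψ = C₂ + C₁ * (ψ : ℂ) + 𝔎 * (R : ℂ) ^ 2 / (𝔠 ^ 2 * (𝔟 + 𝔠 * (ψ : ℂ))) +
      conj 𝔎 * (R : ℂ) ^ 2 / ((conj 𝔠) ^ 2 * (conj 𝔟 + conj 𝔠 * (ψ : ℂ)))) :
    (∀ ψ ∈ Set.Icc (-1 : ℝ) 1, conj (F ψ) = F ψ) ∧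
    (F (-1) = 0 ∧ F 1 = 0) ∧
    (∀ ψ ∈ Set.Icc (-1 : ℝ) 1,
      deriv (deriv F) ψ = 2 * (𝔎 * (R : ℂ) ^ 2 / (𝔟 + 𝔠 * (ψ : ℂ)) ^ 3 +
        conj 𝔎 * (R : ℂ) ^ 2 / (conj 𝔟 + conj 𝔠 * (ψ : ℂ)) ^ 3)) := by
  have hc' : conj 𝔠 ≠ 0 := (map_ne_zero _).2 hc
  have hconj : ∀ ψ : ℝ, conj 𝔟 + conj 𝔠 * (ψ : ℂ) = conj (𝔟 + 𝔠 * (ψ : ℂ)) := by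
    intro ψ; simp
  have hne' : ∀ ψ : ℝ, 𝔟 + 𝔠 * (ψ : ℂ) ≠ 0 → conj 𝔟 + conj 𝔠 * (ψ : ℂ) ≠ 0 := by
    intro ψ hψ
    rw [hconj]
    exact (map_ne_zero _).2 hψ
  have hp : 𝔟 + 𝔠 ≠ 0 := by simpa using h 1 (by norm_num)
  have hm : 𝔟 - 𝔠 ≠ 0 := by simpa [sub_eq_add_neg] using h (-1) (by norm_num)
  have hp' : conj 𝔟 + conj 𝔠 ≠ 0 := by rw [← map_add]; exact (map_ne_zero _).2 hp
  have hm' : conj 𝔟 - conj 𝔠 ≠ 0 := by rw [← map_sub]; exact (map_ne_zero _).2 hm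
  refine ⟨?_, ⟨?_, ?_⟩, ?_⟩
  · intro ψ _
    rw [hF, hC₁, hC₂]
    simp only [map_add, map_sub, map_neg, map_mul, map_div₀, map_pow, Complex.conj_conj,
      Complex.conj_ofReal]
    ring
  · have e1 := half_vanishes (𝔎 * (R : ℂ) ^ 2) 𝔟 𝔠 (-1) hc (by norm_num)
      (by simpa [sub_eq_add_neg] using hm) (by simpa using hp)
    have e2 := half_vanishes (conj 𝔎 * (R : ℂ) ^ 2) (conj 𝔟) (conj 𝔠) (-1) hc' (by norm_num)
      (by simpa [sub_eq_add_neg] using hm') (by simpa using hp')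
    rw [hF, hC₁, hC₂]
    push_cast
    linear_combination e1 + e2
  · have e1 := half_vanishes (𝔎 * (R : ℂ) ^ 2) 𝔟 𝔠 1 hc (by norm_num)
      (by simpa using hp) (by simpa using hm)
    have e2 := half_vanishes (conj 𝔎 * (R : ℂ) ^ 2) (conj 𝔟) (conj 𝔠) 1 hc' (by norm_num)
      (by simpa using hp') (by simpa using hm')
    rw [hF, hC₁, hC₂]
    push_cast
    linear_combination e1 + e2
  · intro ψ hψ
    have hd : ∀ x : ℝ, 𝔟 + 𝔠 * (x : ℂ) ≠ 0 → HasDerivAt F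
        (C₁ + -(𝔎 * (R : ℂ) ^ 2 / (𝔠 * (𝔟 + 𝔠 * (x : ℂ)) ^ 2)) +
          -(conj 𝔎 * (R : ℂ) ^ 2 / (conj 𝔠 * (conj 𝔟 + conj 𝔠 * (x : ℂ)) ^ 2))) x := by
      intro x hx
      have h0 : HasDerivAt (fun y : ℝ => C₂ + C₁ * (y : ℂ)) (C₁ * 1) x :=
        ((Complex.ofRealCLM.hasDerivAt (x := x)).const_mul C₁).const_add C₂
      rw [mul_one] at h0
      rw [funext hF]
      exact (h0.fun_add (hasDerivAt_pole _ 𝔟 𝔠 hc x hx)).fun_add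
        (hasDerivAt_pole _ (conj 𝔟) (conj 𝔠) hc' x (hne' x hx))
    have hcont : Continuous fun x : ℝ => 𝔟 + 𝔠 * (x : ℂ) := by fun_prop
    have hev : ∀ᶠ x in nhds ψ, 𝔟 + 𝔠 * ((x : ℝ) : ℂ) ≠ 0 :=
      hcont.continuousAt.eventually_ne (h ψ hψ)
    have heq := hev.mono fun x hx => (hd x hx).deriv
    rw [Filter.EventuallyEq.deriv_eq heq, mul_add]
    exact (((hasDerivAt_double_pole _ 𝔟 𝔠 hc ψ (h ψ hψ)).const_add C₁).fun_add
      (hasDerivAt_double_pole _ (conj 𝔟) (conj 𝔠) hc' ψ (hne' ψ (h ψ hψ)))).deriv
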